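/- arXiv:2604.01812 — 4 statements merged into one kernel-verified Lean document; each statement's English description precedes it below -/
import Mathlib

section
/- Let Ω ⊂ ℝ^d be a bounded open set, μ ∈ (0,1], n, N ∈ ℕ, U ⊆ ℝⁿ open, and let F : ℝ^d × ℝⁿ → ℝ^N be continuously differentiable on an open set containing cl(Ω) × U, and assume moreover that the partial derivative D₂F of F with respect to its second variable is itself continuously differentiable on an open set containing cl(Ω) × U. Then for every R > 0 and every compact set K ⊆ U there exists a constant C = C(R,K) > 0 with the following property: whenever u, v : ℝ^d → ℝⁿ satisfy ‖u(x)‖ ≤ R, ‖v(x)‖ ≤ R, ‖u(x) − u(y)‖ ≤ R‖x − y‖^μ and ‖v(x) − v(y)‖ ≤ R‖x − y‖^μ for all x, y ∈ cl(Ω), and u(x) + t(v(x) − u(x)) ∈ K for all x ∈ cl(Ω) and t ∈ [0,1], and whenever D > 0 is such that ‖u(x) − v(x)‖ ≤ D for all x ∈ cl(Ω) and ‖(u − v)(x) − (u − v)(y)‖ ≤ D‖x − y‖^μ for all x, y ∈ cl(Ω), then the map h(x) := F(x,u(x)) − F(x,v(x)) satisfies ‖h(x)‖ ≤ C·D for all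 x ∈ cl(Ω) and ‖h(x) − h(y)‖ ≤ C·D‖x − y‖^μ for all x, y ∈ cl(Ω). -/
open Set

/-!
Write `h x = F (x, u x) - F (x, v x)` and let `F'` be the derivative of `F` in its second variable.
The mean value inequality along `t ↦ F (x, pₜ) - F (y, qₜ)`, where `pₜ` and `qₜ` run through the
segments joining `v x` to `u x` and `v y` to `u y`, bounds `h x - h y` by

* `sup ‖F'‖` times the increment of `u - v`, which is at most `D * dist x y ^ μ`, plus
* the oscillation of `F'` between `(x, pₜ)` and `(y, qₜ)` times `‖u y - v y‖ ≤ D`.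

By compactness `F'` is bounded and Lipschitz, and its oscillation is at most a multiple of
`dist x y ^ μ` since `u` and `v` are Hölder continuous and `dist x y` is bounded.
-/

theorem le_rpow_one_sub_mul_rpow {r B μ : ℝ} (hr : 0 ≤ r) (hrB : r ≤ B) (hμ : μ ≤ 1) :
    r ≤ B ^ (1 - μ) * r ^ μ := by
  obtain rfl | hr' := hr.eq_or_lt
  · positivity
  calc r = r ^ (1 - μ) * r ^ μ := by rw [← Real.rpow_add hr', sub_add_cancel, Real.rpow_one]
    _ ≤ B ^ (1 - μ) * r ^ μ := by gcongr

theorem locallyLipschitzOn_of_contDiffOn_of_isOpen {𝕜 E G : Type*} [RCLike 𝕜]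
    [NormedAddCommGroup E] [NormedSpace 𝕜 E] [NormedAddCommGroup G] [NormedSpace 𝕜 G]
    {f : E → G} {s : Set E} (hs : IsOpen s) (hf : ContDiffOn 𝕜 1 f s) :
    LocallyLipschitzOn s f := fun _ hx ↦
  let ⟨L, t, ht, hL⟩ := (hf.contDiffAt (hs.mem_nhds hx)).exists_lipschitzOnWith
  ⟨L, t, mem_nhdsWithin_of_mem_nhds ht, hL⟩

theorem norm_clm_apply_sub_clm_apply_le {𝕜 E G : Type*} [NontriviallyNormedField 𝕜]
    [SeminormedAddCommGroup E] [NormedSpace 𝕜 E] [SeminormedAddCommGroup G] [NormedSpace 𝕜 G]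
    (A B : E →L[𝕜] G) (v w : E) : ‖A v - B w‖ ≤ ‖A‖ * ‖v - w‖ + ‖A - B‖ * ‖w‖ :=
  calc ‖A v - B w‖ = ‖A (v - w) + (A - B) w‖ := by simp
    _ ≤ ‖A‖ * ‖v - w‖ + ‖A - B‖ * ‖w‖ :=
      norm_add_le_of_le (A.le_opNorm _) ((A - B).le_opNorm _)

theorem dist_lineMap_lineMap_le_max {E : Type*} [SeminormedAddCommGroup E] [NormedSpace ℝ E]
    (a b c d : E) {t : ℝ} (ht : t ∈ Icc (0 : ℝ) 1) :
    dist (AffineMap.lineMap a b t) (AffineMap.lineMap c d t) ≤ max (dist a c) (dist b d) := by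
  have hmem : AffineMap.lineMap (a - c) (b - d) t ∈
      Metric.closedBall (0 : E) (max (dist a c) (dist b d)) :=
    (convex_closedBall _ _).lineMap_mem (by simp [dist_eq_norm]) (by simp [dist_eq_norm]) ht
  rwa [mem_closedBall_zero_iff, ← vsub_eq_sub a, ← vsub_eq_sub b, ← AffineMap.lineMap_vsub_lineMap,
    vsub_eq_sub, ← dist_eq_norm] at hmem

section MeanValue

open scoped Convex

variable {E G : Type*} [NormedAddCommGroup E] [NormedSpace ℝ E]
  [NormedAddCommGroup G] [NormedSpace ℝ G]

theorem norm_image_sub_le_of_segment_subset {f : E → G} {f' : E → E →L[ℝ] G} {s : Set E}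
    {a b : E} {M : ℝ} (hf : ∀ p ∈ s, HasFDerivWithinAt f (f' p) s p) (hab : [a -[ℝ] b] ⊆ s)
    (hM : ∀ p ∈ s, ‖f' p‖ ≤ M) : ‖f b - f a‖ ≤ M * ‖b - a‖ :=
  (convex_segment a b).norm_image_sub_le_of_norm_hasFDerivWithin_le
    (fun p hp ↦ (hf p (hab hp)).mono hab) (fun p hp ↦ hM p (hab hp))
    (left_mem_segment ℝ a b) (right_mem_segment ℝ a b)

theorem hasDerivWithinAt_comp_lineMap {f : E → G} {f' : E →L[ℝ] G} {s : Set E} {a b : E} {t : ℝ}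
    (hf : HasFDerivWithinAt f f' s (AffineMap.lineMap a b t)) (hs : [a -[ℝ] b] ⊆ s) :
    HasDerivWithinAt (fun τ : ℝ ↦ f (AffineMap.lineMap a b τ)) (f' (b - a)) (Icc 0 1) t :=
  hf.comp_hasDerivWithinAt t AffineMap.hasDerivWithinAt_lineMap fun _ hτ ↦
    hs (lineMap_mem_segment ℝ a b hτ)

theorem norm_image_sub_sub_image_sub_le {f g : E → G} {f' g' : E → E →L[ℝ] G} {s s' : Set E}
    {a b c d : E} {M ε : ℝ}
    (hf : ∀ p ∈ s, HasFDerivWithinAt f (f' p) s p) (hg : ∀ p ∈ s', HasFDerivWithinAt g (g' p) s' p)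
    (hab : [a -[ℝ] b] ⊆ s) (hcd : [c -[ℝ] d] ⊆ s') (hM : ∀ p ∈ s, ‖f' p‖ ≤ M)
    (hε : ∀ t ∈ Icc (0 : ℝ) 1,
      ‖f' (AffineMap.lineMap a b t) - g' (AffineMap.lineMap c d t)‖ ≤ ε) :
    ‖(f b - f a) - (g d - g c)‖ ≤ M * ‖(b - a) - (d - c)‖ + ε * ‖d - c‖ := by
  have hderiv : ∀ t ∈ Icc (0 : ℝ) 1, HasDerivWithinAt
      (fun τ : ℝ ↦ f (AffineMap.lineMap a b τ) - g (AffineMap.lineMap c d τ))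
      (f' (AffineMap.lineMap a b t) (b - a) - g' (AffineMap.lineMap c d t) (d - c))
      (Icc 0 1) t := fun t ht ↦
    (hasDerivWithinAt_comp_lineMap (hf _ (hab (lineMap_mem_segment ℝ a b ht))) hab).sub
      (hasDerivWithinAt_comp_lineMap (hg _ (hcd (lineMap_mem_segment ℝ c d ht))) hcd)
  have hbound : ∀ t ∈ Ico (0 : ℝ) 1,
      ‖f' (AffineMap.lineMap a b t) (b - a) - g' (AffineMap.lineMap c d t) (d - c)‖ ≤
        M * ‖(b - a) - (d - c)‖ + ε * ‖d - c‖ := fun t ht ↦ by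
    have ht' := Ico_subset_Icc_self ht
    refine (norm_clm_apply_sub_clm_apply_le _ _ _ _).trans ?_
    gcongr
    exacts [hM _ (hab (lineMap_mem_segment ℝ a b ht')), hε t ht']
  simpa [sub_sub_sub_comm] using norm_image_sub_le_of_norm_deriv_le_segment_01' hderiv hbound

end MeanValue

section PartialDerivative

open scoped Convex

variable {X E G : Type*} [PseudoMetricSpace X] [NormedAddCommGroup E] [NormedSpace ℝ E]
  [NormedAddCommGroup G] [NormedSpace ℝ G]
  {F : X × E → G} {F' : X × E → E →L[ℝ] G} {S : Set X} {K : Set E} {M : ℝ} {L : NNReal}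

theorem norm_sub_sub_sub_le_of_lipschitzOnWith_partial_fderiv
    (hF : ∀ x ∈ S, ∀ p ∈ K, HasFDerivWithinAt (fun q ↦ F (x, q)) (F' (x, p)) K p)
    (hM : ∀ z ∈ S ×ˢ K, ‖F' z‖ ≤ M) (hL : LipschitzOnWith L F' (S ×ˢ K))
    {x y : X} (hx : x ∈ S) (hy : y ∈ S) {a b c d : E}
    (hab : [a -[ℝ] b] ⊆ K) (hcd : [c -[ℝ] d] ⊆ K) :
    ‖(F (x, b) - F (x, a)) - (F (y, d) - F (y, c))‖ ≤
      M * ‖(b - a) - (d - c)‖ +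
        L * max (dist x y) (max (dist a c) (dist b d)) * ‖d - c‖ := by
  refine norm_image_sub_sub_image_sub_le (hF x hx) (hF y hy) hab hcd
    (fun p hp ↦ hM (x, p) ⟨hx, hp⟩) fun t ht ↦ ?_
  calc ‖F' (x, AffineMap.lineMap a b t) - F' (y, AffineMap.lineMap c d t)‖
    _ ≤ L * max (dist x y) (dist (AffineMap.lineMap a b t) (AffineMap.lineMap c d t)) := by
      simpa only [dist_eq_norm, Prod.dist_eq] using
        hL.dist_le_mul (x, AffineMap.lineMap a b t) ⟨hx, hab (lineMap_mem_segment ℝ a b ht)⟩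
          (y, AffineMap.lineMap c d t) ⟨hy, hcd (lineMap_mem_segment ℝ c d ht)⟩
    _ ≤ L * max (dist x y) (max (dist a c) (dist b d)) := by
      gcongr
      exact dist_lineMap_lineMap_le_max a b c d ht

theorem norm_sub_sub_sub_le_of_holder {B R D μ : ℝ}
    (hF : ∀ x ∈ S, ∀ p ∈ K, HasFDerivWithinAt (fun q ↦ F (x, q)) (F' (x, p)) K p)
    (hM : ∀ z ∈ S ×ˢ K, ‖F' z‖ ≤ M) (hL : LipschitzOnWith L F' (S ×ˢ K)) (hμ : μ ≤ 1)
    {x y : X} (hx : x ∈ S) (hy : y ∈ S) (hxy : dist x y ≤ B) {a b c d : E}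
    (hab : [a -[ℝ] b] ⊆ K) (hcd : [c -[ℝ] d] ⊆ K)
    (hac : dist a c ≤ R * dist x y ^ μ) (hbd : dist b d ≤ R * dist x y ^ μ)
    (hD : ‖d - c‖ ≤ D) (hD' : ‖(b - a) - (d - c)‖ ≤ D * dist x y ^ μ) :
    ‖(F (x, b) - F (x, a)) - (F (y, d) - F (y, c))‖ ≤
      (M + L * max (B ^ (1 - μ)) R) * D * dist x y ^ μ := by
  have : 0 ≤ M := (norm_nonneg _).trans (hM (x, a) ⟨hx, hab (left_mem_segment ℝ a b)⟩)
  have : 0 ≤ B := dist_nonneg.trans hxy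
  have hosc : max (dist x y) (max (dist a c) (dist b d)) ≤
      max (B ^ (1 - μ)) R * dist x y ^ μ := by
    rw [max_mul_of_nonneg _ _ (by positivity)]
    exact max_le_max (le_rpow_one_sub_mul_rpow dist_nonneg hxy hμ) (max_le hac hbd)
  calc _ ≤ M * ‖(b - a) - (d - c)‖ + L * max (dist x y) (max (dist a c) (dist b d)) * ‖d - c‖ :=
        norm_sub_sub_sub_le_of_lipschitzOnWith_partial_fderiv hF hM hL hx hy hab hcd
    _ ≤ M * (D * dist x y ^ μ) + L * (max (B ^ (1 - μ)) R * dist x y ^ μ) * D := by gcongr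
    _ = (M + L * max (B ^ (1 - μ)) R) * D * dist x y ^ μ := by ring

theorem holder_composition_lipschitz_general {μ : ℝ} (hS : IsCompact S) (hK : IsCompact K)
    (hμ : μ ≤ 1)
    (hF : ∀ x ∈ S, ∀ p ∈ K, HasFDerivWithinAt (fun q ↦ F (x, q)) (F' (x, p)) K p)
    (hF' : LocallyLipschitzOn (S ×ˢ K) F') (R : ℝ) :
    ∃ C > 0, ∀ u v : X → E,
      (∀ x ∈ S, ∀ y ∈ S, dist (u x) (u y) ≤ R * dist x y ^ μ) →
      (∀ x ∈ S, ∀ y ∈ S, dist (v x) (v y) ≤ R * dist x y ^ μ) →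
      (∀ x ∈ S, [u x -[ℝ] v x] ⊆ K) →
      ∀ D : ℝ, (∀ x ∈ S, ‖u x - v x‖ ≤ D) →
        (∀ x ∈ S, ∀ y ∈ S, ‖(u x - v x) - (u y - v y)‖ ≤ D * dist x y ^ μ) →
        (∀ x ∈ S, ‖F (x, u x) - F (x, v x)‖ ≤ C * D) ∧
        (∀ x ∈ S, ∀ y ∈ S,
          ‖(F (x, u x) - F (x, v x)) - (F (y, u y) - F (y, v y))‖ ≤ C * D * dist x y ^ μ) := by
  obtain ⟨L, hL⟩ := hF'.exists_lipschitzOnWith_of_compact (hS.prod hK)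
  obtain ⟨M, hM₀, hM⟩ :=
    ((hS.prod hK).image_of_continuousOn hF'.continuousOn).isBounded.exists_pos_norm_le
  rw [forall_mem_image] at hM
  refine ⟨M + L * max (Metric.diam S ^ (1 - μ)) R, by positivity,
    fun u v hu hv huv D hD hD' ↦ ⟨fun x hx ↦ ?_, fun x hx y hy ↦ ?_⟩⟩
  · have : 0 ≤ D := (norm_nonneg _).trans (hD x hx)
    calc ‖F (x, u x) - F (x, v x)‖ ≤ M * ‖u x - v x‖ :=
          norm_image_sub_le_of_segment_subset (hF x hx) (segment_symm ℝ (u x) (v x) ▸ huv x hx)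
            fun p hp ↦ hM ⟨hx, hp⟩
      _ ≤ (M + L * max (Metric.diam S ^ (1 - μ)) R) * D := by
        gcongr
        exacts [le_add_of_nonneg_right (by positivity), hD x hx]
  · exact norm_sub_sub_sub_le_of_holder hF hM hL hμ hx hy
      (Metric.dist_le_diam_of_mem hS.isBounded hx hy) (segment_symm ℝ (u x) (v x) ▸ huv x hx)
      (segment_symm ℝ (u y) (v y) ▸ huv y hy) (hv x hx y hy) (hu x hx y hy) (hD y hy)
      (hD' x hx y hy)

end PartialDerivative

/-- Lipschitz composition estimate in Hölder spaces, case m = 0 (Proposition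
3.3 of the paper, second assertion): if `F` is `C¹` on a neighbourhood of
`cl(Ω) × U` and the partial derivative `D₂F` of `F` in its second variable is
itself `C¹` there, then for every `R > 0` and compact `K ⊆ U` there is
`C > 0` such that for all `u, v` bounded by `R` and `μ`-Hölder with constant
`R` on `cl(Ω)` whose segment `u + t(v-u)` stays in `K`, and any `D > 0`
bounding `u - v` in sup- and Hölder-seminorm, the difference
`h(x) = F(x,u(x)) - F(x,v(x))` is bounded by `C·D` and `μ`-Hölder with
constant `C·D` on `cl(Ω)`. -/
theorem holder_composition_lipschitz
    {d n N : ℕ}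
    (Ω : Set (EuclideanSpace ℝ (Fin d))) (hΩo : IsOpen Ω)
    (hΩb : Bornology.IsBounded Ω)
    (μ : ℝ) (hμ : μ ∈ Set.Ioc (0 : ℝ) 1)
    (U : Set (EuclideanSpace ℝ (Fin n))) (hU : IsOpen U)
    (F : EuclideanSpace ℝ (Fin d) × EuclideanSpace ℝ (Fin n) → EuclideanSpace ℝ (Fin N))
    (V : Set (EuclideanSpace ℝ (Fin d) × EuclideanSpace ℝ (Fin n)))
    (hV : IsOpen V) (hVsub : (closure Ω) ×ˢ U ⊆ V)
    (hF : ContDiffOn ℝ 1 F V)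
    (hD₂F : ContDiffOn ℝ 1
      (fun z : EuclideanSpace ℝ (Fin d) × EuclideanSpace ℝ (Fin n) =>
        fderiv ℝ (fun p => F (z.1, p)) z.2) V) :
    ∀ R > (0 : ℝ), ∀ K : Set (EuclideanSpace ℝ (Fin n)), IsCompact K → K ⊆ U →
      ∃ C > (0 : ℝ), ∀ u v : EuclideanSpace ℝ (Fin d) → EuclideanSpace ℝ (Fin n),
        (∀ x ∈ closure Ω, ‖u x‖ ≤ R) → (∀ x ∈ closure Ω, ‖v x‖ ≤ R) →
        (∀ x ∈ closure Ω, ∀ y ∈ closure Ω, ‖u x - u y‖ ≤ R * ‖x - y‖ ^ μ) →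
        (∀ x ∈ closure Ω, ∀ y ∈ closure Ω, ‖v x - v y‖ ≤ R * ‖x - y‖ ^ μ) →
        (∀ x ∈ closure Ω, ∀ t ∈ Icc (0 : ℝ) 1, u x + t • (v x - u x) ∈ K) →
        ∀ D > (0 : ℝ),
          (∀ x ∈ closure Ω, ‖u x - v x‖ ≤ D) →
          (∀ x ∈ closure Ω, ∀ y ∈ closure Ω,
            ‖(u x - v x) - (u y - v y)‖ ≤ D * ‖x - y‖ ^ μ) →
          (∀ x ∈ closure Ω, ‖F (x, u x) - F (x, v x)‖ ≤ C * D) ∧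
          (∀ x ∈ closure Ω, ∀ y ∈ closure Ω,
            ‖(F (x, u x) - F (x, v x)) - (F (y, u y) - F (y, v y))‖
              ≤ C * D * ‖x - y‖ ^ μ) := by
  intro R _ K hK hKU
  have hSV : closure Ω ×ˢ K ⊆ V := (prod_mono_right hKU).trans hVsub
  have hF' : ∀ x ∈ closure Ω, ∀ p ∈ K,
      HasFDerivWithinAt (fun q ↦ F (x, q)) (fderiv ℝ (fun q ↦ F (x, q)) p) K p := fun x hx p hp ↦
    have hFd : DifferentiableAt ℝ F (x, p) :=
      (hF.differentiableOn one_ne_zero).differentiableAt (hV.mem_nhds (hSV ⟨hx, hp⟩))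
    (hFd.comp p (hasFDerivAt_prodMk_right x p).differentiableAt).hasFDerivAt.hasFDerivWithinAt
  obtain ⟨C, hC, h⟩ := holder_composition_lipschitz_general hΩb.isCompact_closure hK hμ.2 hF'
    ((locallyLipschitzOn_of_contDiffOn_of_isOpen hV hD₂F).mono hSV) R
  simp only [dist_eq_norm, segment_eq_image', image_subset_iff] at h
  exact ⟨C, hC, fun u v _ _ hu hv huv D _ ↦ h u v hu hv huv D⟩
end

section
/- Let Ω ⊂ ℝ^d be an open set and let A_{ij}^{αβ} : Ω → ℝ (for α, β, i, j ∈ {1,…,d}) be bounded measurable functions. Assume that there exists ν > 0 such that for every smooth compactly supported vector field v ∈ C_c^∞(Ω, ℝ^d), ∫_Ω Σ_{α,β,i,j} A_{ij}^{αβ}(x) ∂_β v^i(x) ∂_α v^j(x) dx ≥ ν ∫_Ω |∇v(x)|² dx. Then for almost every x ∈ Ω (with respect to Lebesgue measure) the Legendre–Hadamard condition holds: for all p, q ∈ ℝ^d, Σ_{α,β,i,j} A_{ij}^{αβ}(x) q^i q^j p_α p_β ≥ ν |p|² |q|². -/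
open Set MeasureTheory

/-!
Fix a covector `ξ`, a vector `η` and a scalar test function `ψ`. The gradients of the test fields
`ψ cos(k ξ) η` and `ψ sin(k ξ) η` are dominated, for large `k`, by rank-one maps `ξ ⊗ η` of size
`k ψ`, and in the sum of the two energies the trigonometric factors cancel: it equals a constant
plus `k² ∫ ψ² B(ξ ⊗ η, ξ ⊗ η)`. Nonnegativity of all energies therefore forces
`∫ ψ² B(ξ ⊗ η, ξ ⊗ η) ≥ 0` for every `ψ`, hence `B(ξ ⊗ η, ξ ⊗ η) ≥ 0` almost everywhere. Choosing
the null set independently of `ξ` and `η` costs only a countable dense set of pairs.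
The Legendre–Hadamard condition is the case where `B(G, G)` is the difference of the two sides of
the coercivity estimate.
-/

open Filter TopologicalSpace Topology
open scoped ContDiff Distributions Manifold

section AlmostEverywhereNonneg

theorem ae_restrict_nonneg_of_forall_setIntegral_isCompact_nonneg {X : Type*} [TopologicalSpace X]
    [T2Space X] [SecondCountableTopology X] [MeasurableSpace X] [BorelSpace X] {μ : Measure X}
    [μ.InnerRegular] {Ω : Set X} {f : X → ℝ} (hΩ : MeasurableSet Ω)
    (hf : LocallyIntegrableOn f Ω μ)
    (h : ∀ s ⊆ Ω, IsCompact s → 0 ≤ ∫ x in s, f x ∂μ) :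
    ∀ᵐ x ∂μ.restrict Ω, 0 ≤ f x := by
  by_contra hneg
  obtain ⟨t, ht_neg, ht, ht_ae⟩ : ∃ t ⊆ {x | f x < 0}, MeasurableSet t ∧
      t =ᵐ[μ.restrict Ω] {x | f x < 0} :=
    (nullMeasurableSet_lt hf.aestronglyMeasurable.aemeasurable
      aemeasurable_const).exists_measurable_subset_ae_eq
  have ht_pos : 0 < μ (t ∩ Ω) := by
    rw [← Measure.restrict_apply ht, measure_congr ht_ae, pos_iff_ne_zero]
    simpa only [ae_iff, not_le] using hneg
  obtain ⟨s, hst, hs, hs_pos⟩ := (ht.inter hΩ).exists_lt_isCompact ht_pos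
  have hsΩ : s ⊆ Ω := hst.trans inter_subset_right
  have hfs : ∀ x ∈ s, 0 < -f x := fun x hx ↦ neg_pos.2 (ht_neg (hst hx).1)
  have hpos : 0 < ∫ x in s, -f x ∂μ := by
    rw [setIntegral_pos_iff_support_of_nonneg_ae
      (ae_restrict_of_forall_mem hs.measurableSet fun x hx ↦ (hfs x hx).le)
      (hf.integrableOn_compact_subset hsΩ hs).neg]
    exact hs_pos.trans_le (measure_mono fun x hx ↦ ⟨(hfs x hx).ne', hx⟩)
  rw [integral_neg] at hpos
  linarith [h s hsΩ hs]

variable {E : Type*} [NormedAddCommGroup E] [NormedSpace ℝ E] [FiniteDimensional ℝ E]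
  {Ω : Opens E}

theorem exists_testFunction_eq_one_iff {s : Set E} (hs : IsCompact s) (hsΩ : s ⊆ Ω) :
    ∃ ψ : 𝓓(Ω, ℝ), (∀ x, ψ x ∈ Icc 0 1) ∧ ∀ x, ψ x = 1 ↔ x ∈ s := by
  obtain ⟨U, hU, hsU, hUΩ, hUc⟩ := exists_open_between_and_isCompact_closure hs Ω.isOpen hsΩ
  obtain ⟨ψ, hψ, hψ01, hψU, hψs⟩ :=
    exists_contMDiff_support_eq_eq_one_iff (n := ⊤) 𝓘(ℝ, E) hU hs.isClosed hsU
  have hψU' : tsupport ψ = closure U := congrArg closure hψU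
  exact ⟨⟨ψ, hψ.contDiff, hUc.of_isClosed_subset isClosed_closure hψU'.subset,
    hψU'.subset.trans hUΩ⟩, fun x ↦ hψ01 (mem_range_self x), fun x ↦ (hψs x).symm⟩

variable [MeasurableSpace E] [BorelSpace E] {μ : Measure E} {f : E → ℝ}

theorem setIntegral_nonneg_of_forall_testFunction_sq_mul (hf : LocallyIntegrableOn f Ω μ)
    (h : ∀ ψ : 𝓓(Ω, ℝ), 0 ≤ ∫ x in Ω, ψ x ^ 2 * f x ∂μ)
    {s : Set E} (hs : IsCompact s) (hsΩ : s ⊆ Ω) : 0 ≤ ∫ x in s, f x ∂μ := by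
  obtain ⟨ψ, hψ01, hψs⟩ := exists_testFunction_eq_one_iff hs hsΩ
  -- The powers of `ψ` decrease to the indicator of `s`, and all live on the support of `ψ`.
  let ψpow (n : ℕ) : 𝓓(Ω, ℝ) :=
    ⟨fun x ↦ ψ x * ψ x ^ n, ψ.contDiff.mul (ψ.contDiff.pow n), ψ.hasCompactSupport.mul_right,
      tsupport_mul_subset_left.trans ψ.tsupport_subset⟩
  have hlim : Tendsto (fun n ↦ ∫ x in Ω, ψpow n x ^ 2 * f x ∂μ) atTop
      (𝓝 (∫ x in Ω, s.indicator f x ∂μ)) := by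
    refine tendsto_integral_of_dominated_convergence ((tsupport ψ).indicator fun x ↦ ‖f x‖)
      (fun n ↦ ((ψpow n).continuous.pow 2).aestronglyMeasurable.mul hf.aestronglyMeasurable)
      ?_ (fun n ↦ ae_of_all _ fun x ↦ ?_) (ae_of_all _ fun x ↦ ?_)
    · have hf_supp : IntegrableOn f (tsupport ψ) μ :=
        hf.integrableOn_compact_subset ψ.tsupport_subset ψ.hasCompactSupport
      exact (IntegrableOn.integrable_indicator hf_supp.norm
        (isClosed_tsupport ψ).measurableSet).integrableOn
    · obtain ⟨hψ0, hψ1⟩ := hψ01 x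
      refine le_indicator_apply (fun _ ↦ ?_) (fun hx ↦ ?_)
      · rw [norm_mul, Real.norm_of_nonneg (sq_nonneg _)]
        have hψn : 0 ≤ ψ x ^ n := pow_nonneg hψ0 n
        exact mul_le_of_le_one_left (norm_nonneg _) (pow_le_one₀ (mul_nonneg hψ0 hψn)
          (mul_le_one₀ hψ1 hψn (pow_le_one₀ hψ0 hψ1)))
      · simp [ψpow, image_eq_zero_of_notMem_tsupport hx]
    · by_cases hx : x ∈ s
      · simp [ψpow, (hψs x).2 hx, hx]
      · have hψx : ψ x < 1 := (hψ01 x).2.lt_of_ne (mt (hψs x).1 hx)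
        have hpow : Tendsto (fun n ↦ ψ x ^ n) atTop (𝓝 0) :=
          tendsto_pow_atTop_nhds_zero_of_lt_one (hψ01 x).1 hψx
        simpa [ψpow, hx] using ((hpow.const_mul (ψ x)).pow 2).mul_const (f x)
  rw [setIntegral_indicator hs.measurableSet, inter_eq_right.2 hsΩ] at hlim
  exact ge_of_tendsto' hlim fun n ↦ h (ψpow n)

theorem ae_restrict_nonneg_of_forall_testFunction_sq_mul [IsLocallyFiniteMeasure μ]
    (hf : LocallyIntegrableOn f Ω μ)
    (h : ∀ ψ : 𝓓(Ω, ℝ), 0 ≤ ∫ x in Ω, ψ x ^ 2 * f x ∂μ) : ∀ᵐ x ∂μ.restrict Ω, 0 ≤ f x :=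
  have := FiniteDimensional.proper_real E
  ae_restrict_nonneg_of_forall_setIntegral_isCompact_nonneg Ω.isOpen.measurableSet hf
    fun _ hsΩ hs ↦ setIntegral_nonneg_of_forall_testFunction_sq_mul hf h hs hsΩ

end AlmostEverywhereNonneg

section Oscillation

variable {E F : Type*} [NormedAddCommGroup E] [NormedSpace ℝ E] [NormedAddCommGroup F]
  [NormedSpace ℝ F] {Ω : Opens E}

/-- The test field `x ↦ ψ x cos (k ξ(x) + θ) η`, used with the phases `θ = 0` and
`θ = -π / 2` to probe a bilinear form on gradients at the rank-one map `ξ.smulRight η`. -/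
noncomputable def oscillatingField (ψ : 𝓓(Ω, ℝ)) (ξ : E →L[ℝ] ℝ) (η : F) (k θ : ℝ) : 𝓓(Ω, F) where
  toFun x := (ψ x * Real.cos (k * ξ x + θ)) • η
  contDiff' := by
    have := ψ.contDiff
    fun_prop
  hasCompactSupport' := ψ.hasCompactSupport.mul_right.smul_right
  tsupport_subset' := (tsupport_smul_subset_left _ _).trans
    (tsupport_mul_subset_left.trans ψ.tsupport_subset)

theorem fderiv_oscillatingField (ψ : 𝓓(Ω, ℝ)) (ξ : E →L[ℝ] ℝ) (η : F) (k θ : ℝ) (x : E) :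
    fderiv ℝ (oscillatingField ψ ξ η k θ) x =
      Real.cos (k * ξ x + θ) • (fderiv ℝ ψ x).smulRight η -
        Real.sin (k * ξ x + θ) • (k * ψ x) • ξ.smulRight η := by
  have hψ : HasFDerivAt ψ (fderiv ℝ ψ x) x :=
    (ψ.contDiff.differentiable (by simp) x).hasFDerivAt
  have hcos := ((ξ.hasFDerivAt (x := x)).const_mul k).add_const θ |>.cos
  refine ((hψ.mul hcos).smul_const η).fderiv.trans ?_
  ext y
  simp only [ContinuousLinearMap.smulRight_apply, add_apply, sub_apply, smul_apply, smul_eq_mul,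
    neg_mul, mul_neg]
  module

theorem bilin_rotation_add_bilin_rotation {V : Type*} [NormedAddCommGroup V] [NormedSpace ℝ V]
    (B : V →L[ℝ] V →L[ℝ] ℝ) (a b : V) (t : ℝ) :
    B (Real.cos t • a - Real.sin t • b) (Real.cos t • a - Real.sin t • b) +
      B (Real.sin t • a + Real.cos t • b) (Real.sin t • a + Real.cos t • b) = B a a + B b b := by
  simp only [map_add, map_sub, map_smul, add_apply, sub_apply, smul_apply, smul_eq_mul]
  linear_combination (B a a + B b b) * Real.sin_sq_add_cos_sq t

end Oscillation

section Energy

set_option maxSynthPendingDepth 3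

theorem integrableOn_bilin_apply {X V : Type*} [TopologicalSpace X] [MeasurableSpace X]
    [OpensMeasurableSpace X] [NormedAddCommGroup V] [NormedSpace ℝ V] {μ : Measure X} {Ω : Set X}
    {B : X → V →L[ℝ] V →L[ℝ] ℝ} {g : X → V} (hB : LocallyIntegrableOn B Ω μ) (hg : Continuous g)
    (hg_supp : HasCompactSupport g) (hgΩ : tsupport g ⊆ Ω) :
    IntegrableOn (fun x ↦ B x (g x) (g x)) Ω μ := by
  obtain ⟨C, hC⟩ := hg.bounded_above_of_compact_support hg_supp
  have hB' : IntegrableOn B (tsupport g) μ := hB.integrableOn_compact_subset hgΩ hg_supp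
  have hg' : AEStronglyMeasurable g (μ.restrict (tsupport g)) :=
    hg.continuousOn.aestronglyMeasurable_of_isCompact hg_supp (isClosed_tsupport g).measurableSet
  have hBg : IntegrableOn (fun x ↦ B x (g x) (g x)) (tsupport g) μ := by
    refine (hB'.norm.mul_const (C * C)).mono' ?_ (ae_of_all _ fun x ↦ ?_)
    · exact (ContinuousLinearMap.id ℝ _).aestronglyMeasurable_comp₂
        ((ContinuousLinearMap.id ℝ _).aestronglyMeasurable_comp₂ hB'.aestronglyMeasurable hg') hg'
    · calc ‖B x (g x) (g x)‖ ≤ ‖B x‖ * ‖g x‖ * ‖g x‖ := (B x).le_opNorm₂ _ _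
        _ ≤ ‖B x‖ * (C * C) := by
          rw [mul_assoc]
          have := hC x
          gcongr
          exact (norm_nonneg _).trans this
  refine ((integrableOn_iff_integrable_of_support_subset fun x hx ↦ ?_).1 hBg).integrableOn
  contrapose! hx
  simp [image_eq_zero_of_notMem_tsupport hx]

variable {E F : Type*} [NormedAddCommGroup E] [NormedSpace ℝ E] [NormedAddCommGroup F]
  [NormedSpace ℝ F] {Ω : Opens E} [MeasurableSpace E] {μ : Measure E}
  {B : E → (E →L[ℝ] F) →L[ℝ] (E →L[ℝ] F) →L[ℝ] ℝ}

/-- The quadratic energy `∫_Ω B(x)(Dv, Dv) dμ` of a test field. The bilinear forms `B x` take whole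
gradients as arguments, so that no coordinates are involved. -/
noncomputable def gradientEnergy (μ : Measure E) (B : E → (E →L[ℝ] F) →L[ℝ] (E →L[ℝ] F) →L[ℝ] ℝ)
    (v : 𝓓(Ω, F)) : ℝ :=
  ∫ x in Ω, B x (fderiv ℝ v x) (fderiv ℝ v x) ∂μ

variable [BorelSpace E]

theorem integrableOn_bilin_fderiv (hB : LocallyIntegrableOn B Ω μ) (v : 𝓓(Ω, F)) :
    IntegrableOn (fun x ↦ B x (fderiv ℝ v x) (fderiv ℝ v x)) Ω μ :=
  integrableOn_bilin_apply hB (v.contDiff.continuous_fderiv (by simp))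
    (v.hasCompactSupport.fderiv ℝ) ((tsupport_fderiv_subset ℝ).trans v.tsupport_subset)

theorem gradientEnergy_oscillatingField_add (hB : LocallyIntegrableOn B Ω μ) (ψ : 𝓓(Ω, ℝ))
    (ξ : E →L[ℝ] ℝ) (η : F) (k : ℝ) :
    gradientEnergy μ B (oscillatingField ψ ξ η k 0) +
        gradientEnergy μ B (oscillatingField ψ ξ η k (-(Real.pi / 2))) =
      (∫ x in Ω, B x ((fderiv ℝ ψ x).smulRight η) ((fderiv ℝ ψ x).smulRight η) ∂μ) +
        k ^ 2 * ∫ x in Ω, ψ x ^ 2 * B x (ξ.smulRight η) (ξ.smulRight η) ∂μ := by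
  have hψ : Continuous (fderiv ℝ ψ) := ψ.contDiff.continuous_fderiv (by simp)
  have hgrad : IntegrableOn (fun x ↦ B x ((fderiv ℝ ψ x).smulRight η)
      ((fderiv ℝ ψ x).smulRight η)) Ω μ := by
    let L := ContinuousLinearMap.smulRightL ℝ E F |>.flip η
    exact integrableOn_bilin_apply hB (L.continuous.comp hψ)
      ((ψ.hasCompactSupport.fderiv ℝ).comp_left (map_zero L))
      ((tsupport_comp_subset (map_zero L) _).trans <|
        (tsupport_fderiv_subset ℝ).trans ψ.tsupport_subset)
  have hrankOne : IntegrableOn (fun x ↦ ψ x ^ 2 * B x (ξ.smulRight η) (ξ.smulRight η)) Ω μ := by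
    simpa [pow_two, mul_assoc] using integrableOn_bilin_apply hB
      (ψ.continuous.smul (continuous_const (y := ξ.smulRight η))) ψ.hasCompactSupport.smul_right
      ((tsupport_smul_subset_left _ _).trans ψ.tsupport_subset)
  rw [gradientEnergy, gradientEnergy, ← integral_add (integrableOn_bilin_fderiv hB _)
    (integrableOn_bilin_fderiv hB _), ← integral_const_mul,
    ← integral_add hgrad (hrankOne.const_mul _)]
  congr with x
  -- With `t = k ξ(x)`, the two gradients are `cos t • a - sin t • b` and `sin t • a + cos t • b`.
  have hrot := bilin_rotation_add_bilin_rotation (B x) ((fderiv ℝ ψ x).smulRight η)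
    ((k * ψ x) • ξ.smulRight η) (k * ξ x)
  simp only [fderiv_oscillatingField, add_zero, ← sub_eq_add_neg, Real.cos_sub_pi_div_two,
    Real.sin_sub_pi_div_two, neg_smul, sub_neg_eq_add]
  simp only [hrot, map_smul, smul_apply, smul_eq_mul]
  ring

theorem nonneg_of_forall_add_sq_mul_nonneg {a b : ℝ} (h : ∀ k : ℝ, 0 ≤ a + k ^ 2 * b) :
    0 ≤ b := by
  by_contra! hb
  have hk := h √((a ^ 2 + 1) / -b)
  rw [Real.sq_sqrt (div_nonneg (by positivity) (neg_pos.2 hb).le), div_neg, neg_mul,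
    div_mul_cancel₀ _ hb.ne] at hk
  nlinarith [sq_nonneg (a - 1)]

theorem setIntegral_sq_mul_rankOne_nonneg (hB : LocallyIntegrableOn B Ω μ)
    (h : ∀ v : 𝓓(Ω, F), 0 ≤ gradientEnergy μ B v) (ξ : E →L[ℝ] ℝ) (η : F) (ψ : 𝓓(Ω, ℝ)) :
    0 ≤ ∫ x in Ω, ψ x ^ 2 * B x (ξ.smulRight η) (ξ.smulRight η) ∂μ := by
  refine nonneg_of_forall_add_sq_mul_nonneg
    (a := ∫ x in Ω, B x ((fderiv ℝ ψ x).smulRight η) ((fderiv ℝ ψ x).smulRight η) ∂μ) fun k ↦ ?_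
  rw [← gradientEnergy_oscillatingField_add hB]
  exact add_nonneg (h _) (h _)

theorem ae_rankOne_nonneg [FiniteDimensional ℝ E] [IsLocallyFiniteMeasure μ]
    (hB : LocallyIntegrableOn B Ω μ)
    (h : ∀ v : 𝓓(Ω, F), 0 ≤ gradientEnergy μ B v) (ξ : E →L[ℝ] ℝ) (η : F) :
    ∀ᵐ x ∂μ.restrict Ω, 0 ≤ B x (ξ.smulRight η) (ξ.smulRight η) := by
  let G := ξ.smulRight η
  refine ae_restrict_nonneg_of_forall_testFunction_sq_mul ?_
    (setIntegral_sq_mul_rankOne_nonneg hB h ξ η)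
  exact ((ContinuousLinearMap.apply ℝ ℝ G).comp
    (ContinuousLinearMap.apply ℝ ((E →L[ℝ] F) →L[ℝ] ℝ) G)).locallyIntegrableOn_comp hB

theorem ae_forall_rankOne_nonneg [FiniteDimensional ℝ E] [IsLocallyFiniteMeasure μ]
    [SeparableSpace F] (hB : LocallyIntegrableOn B Ω μ)
    (h : ∀ v : 𝓓(Ω, F), 0 ≤ gradientEnergy μ B v) :
    ∀ᵐ x ∂μ.restrict Ω, ∀ (ξ : E →L[ℝ] ℝ) (η : F), 0 ≤ B x (ξ.smulRight η) (ξ.smulRight η) := by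
  obtain ⟨S, hS, hS_dense⟩ := exists_countable_dense ((E →L[ℝ] ℝ) × F)
  filter_upwards [(ae_ball_iff hS).2 fun z _ ↦ ae_rankOne_nonneg hB h z.1 z.2] with x hx ξ η
  have hrank : Continuous fun z : (E →L[ℝ] ℝ) × F ↦ z.1.smulRight z.2 :=
    (ContinuousLinearMap.smulRightL ℝ E F).continuous₂
  have hclosed : IsClosed {z : (E →L[ℝ] ℝ) × F |
      0 ≤ B x (z.1.smulRight z.2) (z.1.smulRight z.2)} :=
    isClosed_le continuous_const ((B x).continuous₂.comp₂ hrank hrank)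
  exact closure_minimal (s := S) hx hclosed (hS_dense (ξ, η))

theorem ae_forall_rankOne_le_of_gradientEnergy_le [FiniteDimensional ℝ E]
    [IsLocallyFiniteMeasure μ] [SeparableSpace F]
    {B₁ B₂ : E → (E →L[ℝ] F) →L[ℝ] (E →L[ℝ] F) →L[ℝ] ℝ}
    (hB₁ : LocallyIntegrableOn B₁ Ω μ) (hB₂ : LocallyIntegrableOn B₂ Ω μ)
    (h : ∀ v : 𝓓(Ω, F), gradientEnergy μ B₁ v ≤ gradientEnergy μ B₂ v) :
    ∀ᵐ x ∂μ.restrict Ω, ∀ (ξ : E →L[ℝ] ℝ) (η : F),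
      B₁ x (ξ.smulRight η) (ξ.smulRight η) ≤ B₂ x (ξ.smulRight η) (ξ.smulRight η) := by
  have hsub (v : 𝓓(Ω, F)) : 0 ≤ gradientEnergy μ (B₂ - B₁) v := by
    simp only [gradientEnergy, Pi.sub_apply, sub_apply]
    rw [integral_sub (integrableOn_bilin_fderiv hB₂ v) (integrableOn_bilin_fderiv hB₁ v)]
    exact sub_nonneg.2 (h v)
  filter_upwards [ae_forall_rankOne_nonneg (hB₂.sub hB₁) hsub] with x hx ξ η
  exact sub_nonneg.1 (hx ξ η)

end Energy

section Coefficients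

set_option maxSynthPendingDepth 3

variable {ι κ : Type*} {E F : Type*} [NormedAddCommGroup E] [NormedSpace ℝ E]
  [NormedAddCommGroup F] [NormedSpace ℝ F]

/-- The entry `G^i_α = f i (G (e α))` of a linear map `G`, as a continuous linear form in `G`. The
vectors `e α` and the linear forms `f i` are arbitrary; bases give the usual matrix entries. -/
noncomputable def matrixEntry (e : ι → E) (f : κ → F →L[ℝ] ℝ) (i : κ) (α : ι) :
    (E →L[ℝ] F) →L[ℝ] ℝ :=
  (f i).comp (ContinuousLinearMap.apply ℝ F (e α))

theorem matrixEntry_apply (e : ι → E) (f : κ → F →L[ℝ] ℝ) (i : κ) (α : ι) (G : E →L[ℝ] F) :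
    matrixEntry e f i α G = f i (G (e α)) := rfl

variable [Fintype ι] [Fintype κ]

section Forms

variable {V : Type*} [NormedAddCommGroup V] [NormedSpace ℝ V]

/-- The bilinear form `(G, H) ↦ ∑ a_{ij}^{αβ} G^i_β H^j_α` whose values at gradients enter the
coercivity estimate. The entries `G^i_α` are given by an arbitrary family `ℓ i α` of continuous
linear forms, and `a i j α β` stands for `a_{ij}^{αβ}`. -/
noncomputable def coefficientForm (ℓ : κ → ι → V →L[ℝ] ℝ) (a : κ → κ → ι → ι → ℝ) :
    V →L[ℝ] V →L[ℝ] ℝ :=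
  ∑ α, ∑ β, ∑ i, ∑ j, a i j α β • (ℓ i β).smulRight (ℓ j α)

/-- The bilinear form `(G, H) ↦ ∑ G^i_α H^i_α`, which is the Frobenius inner product when the
linear forms `ℓ i α` are the matrix entries. -/
noncomputable def frobeniusForm (ℓ : κ → ι → V →L[ℝ] ℝ) : V →L[ℝ] V →L[ℝ] ℝ :=
  ∑ i, ∑ α, (ℓ i α).smulRight (ℓ i α)

theorem coefficientForm_apply (ℓ : κ → ι → V →L[ℝ] ℝ) (a : κ → κ → ι → ι → ℝ) (G H : V) :
    coefficientForm ℓ a G H = ∑ α, ∑ β, ∑ i, ∑ j, a i j α β * ℓ i β G * ℓ j α H := by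
  simp [coefficientForm, mul_assoc]

theorem frobeniusForm_self (ℓ : κ → ι → V →L[ℝ] ℝ) (G : V) :
    frobeniusForm ℓ G G = ∑ i, ∑ α, ℓ i α G ^ 2 := by
  simp [frobeniusForm, pow_two]

theorem locallyIntegrableOn_coefficientForm {X : Type*} [TopologicalSpace X]
    [LocallyCompactSpace X] [MeasurableSpace X] {μ : Measure X} {Ω : Set X}
    (hΩ : IsLocallyClosed Ω) (ℓ : κ → ι → V →L[ℝ] ℝ) {A : κ → κ → ι → ι → X → ℝ}
    (hA : ∀ i j α β, LocallyIntegrableOn (A i j α β) Ω μ) :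
    LocallyIntegrableOn (fun x ↦ coefficientForm ℓ fun i j α β ↦ A i j α β x) Ω μ := by
  rw [locallyIntegrableOn_iff hΩ]
  intro K hKΩ hK
  exact integrable_finsetSum _ fun α _ ↦ integrable_finsetSum _ fun β _ ↦
    integrable_finsetSum _ fun i _ ↦ integrable_finsetSum _ fun j _ ↦
      ((hA i j α β).integrableOn_compact_subset hKΩ hK).smul_const _

end Forms

theorem coefficientForm_matrixEntry_rankOne (e : ι → E) (f : κ → F →L[ℝ] ℝ)
    (a : κ → κ → ι → ι → ℝ) (ξ : E →L[ℝ] ℝ) (η : F) :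
    coefficientForm (matrixEntry e f) a (ξ.smulRight η) (ξ.smulRight η) =
      ∑ α, ∑ β, ∑ i, ∑ j, a i j α β * f i η * f j η * ξ (e α) * ξ (e β) := by
  simp only [coefficientForm_apply, matrixEntry_apply, ContinuousLinearMap.smulRight_apply,
    map_smul, smul_eq_mul]
  refine Finset.sum_congr rfl fun α _ ↦ Finset.sum_congr rfl fun β _ ↦
    Finset.sum_congr rfl fun i _ ↦ Finset.sum_congr rfl fun j _ ↦ ?_
  ring

theorem frobeniusForm_matrixEntry_rankOne (e : ι → E) (f : κ → F →L[ℝ] ℝ) (ξ : E →L[ℝ] ℝ) (η : F) :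
    frobeniusForm (matrixEntry e f) (ξ.smulRight η) (ξ.smulRight η) =
      (∑ α, ξ (e α) ^ 2) * ∑ i, f i η ^ 2 := by
  simp only [frobeniusForm_self, matrixEntry_apply, ContinuousLinearMap.smulRight_apply,
    map_smul, smul_eq_mul, mul_pow]
  rw [Finset.sum_comm, Finset.sum_mul_sum]

variable [FiniteDimensional ℝ E] [MeasurableSpace E] [BorelSpace E] [SeparableSpace F]
  {μ : Measure E} [IsLocallyFiniteMeasure μ] {Ω : Opens E}

theorem ae_legendreHadamard_of_coercive (e : ι → E) (f : κ → F →L[ℝ] ℝ)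
    {A : κ → κ → ι → ι → E → ℝ} (hA : ∀ i j α β, LocallyIntegrableOn (A i j α β) Ω μ) {ν : ℝ}
    (hcoer : ∀ v : 𝓓(Ω, F), ν * ∫ x in Ω, ∑ i, ∑ α, f i (fderiv ℝ v x (e α)) ^ 2 ∂μ ≤
      ∫ x in Ω, ∑ α, ∑ β, ∑ i, ∑ j,
        A i j α β x * f i (fderiv ℝ v x (e β)) * f j (fderiv ℝ v x (e α)) ∂μ) :
    ∀ᵐ x ∂μ.restrict Ω, ∀ (ξ : E →L[ℝ] ℝ) (η : F),
      ν * ((∑ α, ξ (e α) ^ 2) * ∑ i, f i η ^ 2) ≤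
        ∑ α, ∑ β, ∑ i, ∑ j, A i j α β x * f i η * f j η * ξ (e α) * ξ (e β) := by
  have := FiniteDimensional.proper_real E
  let a (x : E) := coefficientForm (matrixEntry e f) fun i j α β ↦ A i j α β x
  let b (_ : E) := ν • frobeniusForm (matrixEntry e f)
  have ha : LocallyIntegrableOn a Ω μ :=
    locallyIntegrableOn_coefficientForm Ω.isOpen.isLocallyClosed _ hA
  have hb : LocallyIntegrableOn b Ω μ := locallyIntegrableOn_const _
  have henergy (v : 𝓓(Ω, F)) : gradientEnergy μ b v ≤ gradientEnergy μ a v := by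
    simpa only [gradientEnergy, a, b, smul_apply, smul_eq_mul, integral_const_mul,
      coefficientForm_apply, frobeniusForm_self, matrixEntry_apply] using hcoer v
  filter_upwards [ae_forall_rankOne_le_of_gradientEnergy_le hb ha henergy] with x hx ξ η
  rw [← coefficientForm_matrixEntry_rankOne, ← frobeniusForm_matrixEntry_rankOne]
  exact hx ξ η

end Coefficients

theorem locallyIntegrableOn_of_forall_norm_le {X V : Type*} [TopologicalSpace X]
    [MeasurableSpace X] [OpensMeasurableSpace X] [NormedAddCommGroup V] {μ : Measure X}
    [IsLocallyFiniteMeasure μ] {Ω : Set X} (hΩ : MeasurableSet Ω) {f : X → V}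
    (hf : AEStronglyMeasurable f (μ.restrict Ω)) {C : ℝ} (hC : ∀ x ∈ Ω, ‖f x‖ ≤ C) :
    LocallyIntegrableOn f Ω μ :=
  locallyIntegrableOn_of_locallyIntegrable_restrict <| (locallyIntegrable_const C).mono hf <|
    ae_restrict_of_forall_mem hΩ fun x hx ↦ (hC x hx).trans (Real.le_norm_self C)

theorem coercivity_implies_legendre_hadamard_general
    {ι κ : Type*} [Fintype ι] [DecidableEq ι] [Fintype κ]
    {μ : Measure (EuclideanSpace ℝ ι)} [IsLocallyFiniteMeasure μ]
    {Ω : Set (EuclideanSpace ℝ ι)} (hΩ : IsOpen Ω)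
    {A : κ → κ → ι → ι → EuclideanSpace ℝ ι → ℝ}
    (hA : ∀ i j α β, LocallyIntegrableOn (A i j α β) Ω μ) {ν : ℝ}
    (hcoer : ∀ v : EuclideanSpace ℝ ι → EuclideanSpace ℝ κ,
      ContDiff ℝ ∞ v → HasCompactSupport v → tsupport v ⊆ Ω →
      ν * ∫ x in Ω, ∑ i, ∑ α, (fderiv ℝ v x (EuclideanSpace.single α 1) i) ^ 2 ∂μ
        ≤ ∫ x in Ω, ∑ α, ∑ β, ∑ i, ∑ j,
            A i j α β x * (fderiv ℝ v x (EuclideanSpace.single β 1) i) *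
              (fderiv ℝ v x (EuclideanSpace.single α 1) j) ∂μ) :
    ∀ᵐ x ∂μ, x ∈ Ω → ∀ (p : ι → ℝ) (q : κ → ℝ),
      ν * ((∑ α, (p α) ^ 2) * (∑ i, (q i) ^ 2)) ≤
        ∑ α, ∑ β, ∑ i, ∑ j, A i j α β x * q i * q j * p α * p β := by
  let Ω' : Opens (EuclideanSpace ℝ ι) := ⟨Ω, hΩ⟩
  let e (α : ι) : EuclideanSpace ℝ ι := EuclideanSpace.single α 1
  let f (i : κ) : EuclideanSpace ℝ κ →L[ℝ] ℝ := EuclideanSpace.proj i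
  have hcoer' (v : 𝓓(Ω', EuclideanSpace ℝ κ)) :
      ν * ∫ x in Ω', ∑ i, ∑ α, f i (fderiv ℝ v x (e α)) ^ 2 ∂μ ≤
        ∫ x in Ω', ∑ α, ∑ β, ∑ i, ∑ j,
          A i j α β x * f i (fderiv ℝ v x (e β)) * f j (fderiv ℝ v x (e α)) ∂μ :=
    hcoer v v.contDiff v.hasCompactSupport v.tsupport_subset
  rw [← ae_restrict_iff' hΩ.measurableSet]
  filter_upwards [ae_legendreHadamard_of_coercive e f hA hcoer'] with x hx p q
  simpa [e, f, EuclideanSpace.inner_single_right] using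
    hx (innerSL ℝ (WithLp.toLp 2 p)) (WithLp.toLp 2 q)

/-- Coercivity implies the Legendre–Hadamard condition almost everywhere
(Proposition 3.7 of the paper): if the bounded measurable coefficients
`A_{ij}^{αβ}` satisfy the coercivity estimate for all smooth compactly
supported test fields `v` with support in `Ω`, then for a.e. `x ∈ Ω` the
Legendre–Hadamard condition holds with the same constant `ν`. -/
theorem coercivity_implies_legendre_hadamard
    {d : ℕ}
    (Ω : Set (EuclideanSpace ℝ (Fin d))) (hΩo : IsOpen Ω)
    (A : Fin d → Fin d → Fin d → Fin d → EuclideanSpace ℝ (Fin d) → ℝ)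
    (hAmeas : ∀ i j α β, Measurable (A i j α β))
    (hAbdd : ∃ Cb : ℝ, ∀ i j α β, ∀ x ∈ Ω, |A i j α β x| ≤ Cb)
    (ν : ℝ) (hν : 0 < ν)
    (hcoer : ∀ v : EuclideanSpace ℝ (Fin d) → EuclideanSpace ℝ (Fin d),
      ContDiff ℝ (⊤ : ℕ∞) v → HasCompactSupport v → tsupport v ⊆ Ω →
      ν * ∫ x in Ω, ∑ i, ∑ α, (fderiv ℝ v x (EuclideanSpace.single α 1) i) ^ 2
        ≤ ∫ x in Ω, ∑ α, ∑ β, ∑ i, ∑ j,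
            A i j α β x * (fderiv ℝ v x (EuclideanSpace.single β 1) i) *
              (fderiv ℝ v x (EuclideanSpace.single α 1) j)) :
    ∀ᵐ x : EuclideanSpace ℝ (Fin d), x ∈ Ω →
      ∀ p q : Fin d → ℝ,
        ν * ((∑ α, (p α) ^ 2) * (∑ i, (q i) ^ 2)) ≤
          ∑ α, ∑ β, ∑ i, ∑ j, A i j α β x * q i * q j * p α * p β := by
  obtain ⟨C, hC⟩ := hAbdd
  exact coercivity_implies_legendre_hadamard_general hΩo
    (fun i j α β ↦ locallyIntegrableOn_of_forall_norm_le hΩo.measurableSet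
      (hAmeas i j α β).aestronglyMeasurable (hC i j α β)) hcoer
end

section
/- Let d ≥ 2 and B ∈ ℝ^{d×d}. With SO(d) = {Q ∈ ℝ^{d×d} : QᵀQ = 1_d, det Q = 1} and dist_F(A, SO(d)) = inf{‖A − Q‖_F : Q ∈ SO(d)} the Frobenius distance to SO(d), one has lim_{ε → 0⁺} dist_F(1_d + εB, SO(d)) / ε = ‖(B + Bᵀ)/2‖_F. In particular dist_F(1_d + εB, SO(d)) = (ε/2)‖B + Bᵀ‖_F + O(ε²) as ε → 0⁺. -/
open Filter Asymptotics Matrix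
open scoped Matrix

/-- Frobenius norm of a real square matrix. -/
noncomputable def frobNorm {d : ℕ} (A : Matrix (Fin d) (Fin d) ℝ) : ℝ :=
  Real.sqrt (∑ i, ∑ j, (A i j) ^ 2)

/-- Frobenius distance of a matrix to the special orthogonal group SO(d). -/
noncomputable def distSO {d : ℕ} (A : Matrix (Fin d) (Fin d) ℝ) : ℝ :=
  sInf {r : ℝ | ∃ Q : Matrix (Fin d) (Fin d) ℝ,
    Qᵀ * Q = 1 ∧ Q.det = 1 ∧ r = frobNorm (A - Q)}

/-!
Let `E = 1 + A - Q` with `Q` orthogonal. Expanding `QᵀQ = 1` around the identity gives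
`A + Aᵀ = E + Eᵀ - (Q - 1)ᵀ(Q - 1)`, so `‖E‖ ≥ ‖A + Aᵀ‖ / 2` up to a quadratic error, because
`‖Q - 1‖ ≤ ‖A‖ + ‖E‖` and only `‖E‖ ≤ ‖A‖` matters. Conversely, the Cayley transform
`Q = (1 - X)⁻¹(1 + X)` of the skew matrix `X = (A - Aᵀ) / 4` is a rotation with
`Q = 1 + 2X + O(‖X‖²)`, hence `1 + A - Q = (A + Aᵀ) / 2 + O(‖A‖²)`. Everything except `det Q = 1`
works in a complete normed star algebra.
-/

open Metric

section Asymptotics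

variable {α 𝕜 : Type*} [NormedField 𝕜] {l : Filter α} {f g : α → 𝕜} {c : 𝕜}

theorem tendsto_div_of_sub_mul_isLittleO (hg : ∀ᶠ x in l, g x ≠ 0)
    (h : (fun x => f x - g x * c) =o[l] g) : Tendsto (fun x => f x / g x) l (nhds c) := by
  have hlim : Tendsto (fun x => (f x - g x * c) / g x + c) l (nhds (0 + c)) :=
    h.tendsto_div_nhds_zero.add_const c
  rw [zero_add] at hlim
  refine hlim.congr' ?_
  filter_upwards [hg] with x hx
  field_simp
  ring

end Asymptotics

section CayleyTransform

/-- The Cayley transform `(1 - x)⁻¹ (1 + x)`, which maps skew-adjoint elements to unitary ones.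
It is defined in any ring through `Ring.inverse`, hence is `0` when `1 - x` is not invertible. -/
noncomputable def cayleyTransform {R : Type*} [Ring R] (x : R) : R :=
  Ring.inverse (1 - x) * (1 + x)

theorem one_sub_mul_cayleyTransform {R : Type*} [Ring R] {x : R} (h : IsUnit (1 - x)) :
    (1 - x) * cayleyTransform x = 1 + x :=
  Ring.mul_inverse_cancel_left _ _ h

theorem one_sub_norm_mul_norm_cayleyTransform_sub_le {R : Type*} [SeminormedRing R] {x : R}
    (h : IsUnit (1 - x)) :
    (1 - ‖x‖) * ‖cayleyTransform x - (1 + 2 • x)‖ ≤ 2 * ‖x‖ ^ 2 := by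
  set r := cayleyTransform x - (1 + 2 • x) with hr
  have hfix : r = x * r + 2 • (x * x) := by
    have hmul := one_sub_mul_cayleyTransform h
    rw [← sub_eq_zero] at hmul ⊢
    rw [← hmul, hr]
    noncomm_ring
  have hnorm : ‖r‖ ≤ ‖x‖ * ‖r‖ + 2 * (‖x‖ * ‖x‖) :=
    calc ‖r‖ = ‖x * r + 2 • (x * x)‖ := congrArg _ hfix
      _ ≤ ‖x * r‖ + ‖2 • (x * x)‖ := norm_add_le _ _
      _ ≤ ‖x‖ * ‖r‖ + 2 * (‖x‖ * ‖x‖) := by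
        gcongr
        · exact norm_mul_le _ _
        · exact norm_nsmul_le.trans (by push_cast; gcongr; exact norm_mul_le _ _)
  linarith

theorem cayleyTransform_mem_unitary {R : Type*} [Ring R] [StarRing R] {x : R}
    (hx : star x = -x) (h : IsUnit (1 - x)) : cayleyTransform x ∈ unitary R := by
  obtain ⟨u, hu⟩ := h
  have hu_star : ((star u : Rˣ) : R) = 1 + x := by simp [hu, hx]
  have hcomm : u * star u = star u * star (star u) := Units.ext <| by
    simp only [star_star, Units.val_mul, hu_star, hu]
    noncomm_ring
  have hmem : ((u⁻¹ : Rˣ) * (star u : Rˣ) : R) ∈ unitary R :=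
    (Units.inv_mul_mem_unitary u (star u)).2 hcomm
  rwa [hu_star, ← Ring.inverse_unit, hu] at hmem

variable {n R : Type*} [Fintype n] [DecidableEq n] [CommRing R] {X : Matrix n n R}

theorem det_cayleyTransform_of_transpose_eq_neg (hX : Xᵀ = -X) (h : IsUnit (1 - X)) :
    (cayleyTransform X).det = 1 := by
  have hdet : (1 + X).det = (1 - X).det := by
    rw [← det_transpose (1 - X), transpose_sub, transpose_one, hX, sub_neg_eq_add]
  have hmul := congrArg det (one_sub_mul_cayleyTransform h)
  rw [det_mul, hdet] at hmul
  exact ((isUnit_iff_isUnit_det _).1 h).mul_eq_left.1 hmul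

theorem cayleyTransform_mem_specialOrthogonalGroup (hX : Xᵀ = -X) (h : IsUnit (1 - X)) :
    cayleyTransform X ∈ specialOrthogonalGroup n R :=
  letI : StarRing R := starRingOfComm
  ⟨cayleyTransform_mem_unitary hX h, det_cayleyTransform_of_transpose_eq_neg hX h⟩

end CayleyTransform

section NormedStarRing

variable {R : Type*}

theorem norm_add_star_le [SeminormedAddCommGroup R] [StarAddMonoid R] [NormedStarGroup R] (a : R) :
    ‖a + star a‖ ≤ 2 * ‖a‖ :=
  (norm_add_le _ _).trans_eq <| by rw [norm_star, two_mul]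

theorem norm_sub_star_le [SeminormedAddCommGroup R] [StarAddMonoid R] [NormedStarGroup R] (a : R) :
    ‖a - star a‖ ≤ 2 * ‖a‖ :=
  (norm_sub_le _ _).trans_eq <| by rw [norm_star, two_mul]

theorem norm_quarter_smul_sub_star_le [SeminormedAddCommGroup R] [StarAddMonoid R]
    [NormedStarGroup R] [NormedSpace ℝ R] (a : R) :
    ‖(1 / 4 : ℝ) • (a - star a)‖ ≤ ‖a‖ / 2 := by
  rw [norm_smul, Real.norm_of_nonneg (by norm_num)]
  linarith [norm_sub_star_le a]

theorem half_norm_add_star_sub_le_norm_one_add_sub [SeminormedRing R] [StarRing R]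
    [NormedStarGroup R] (a : R) {q : R} (hq : q ∈ unitary R) :
    ‖a + star a‖ / 2 - 2 * ‖a‖ ^ 2 ≤ ‖1 + a - q‖ := by
  set e := 1 + a - q with he
  have ha_sym : ‖a + star a‖ ≤ 2 * ‖a‖ := norm_add_star_le a
  rcases le_total ‖a‖ ‖e‖ with hle | hle
  · linarith [sq_nonneg ‖a‖]
  have hsym : a + star a = e + star e - star (q - 1) * (q - 1) := by
    have hexp : star (q - 1) * (q - 1) = 1 - star q - q + 1 := by
      rw [star_sub, star_one, sub_mul, mul_sub, Unitary.star_mul_self_of_mem hq]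
      noncomm_ring
    rw [hexp, he, star_sub, star_add, star_one]
    abel
  have hq_sub : ‖q - 1‖ ≤ 2 * ‖a‖ :=
    calc ‖q - 1‖ = ‖a - e‖ := by rw [he]; congr 1; abel
      _ ≤ ‖a‖ + ‖e‖ := norm_sub_le _ _
      _ ≤ 2 * ‖a‖ := by linarith
  have hbound : ‖a + star a‖ ≤ 2 * ‖e‖ + (2 * ‖a‖) ^ 2 :=
    calc ‖a + star a‖ ≤ ‖e + star e‖ + ‖star (q - 1) * (q - 1)‖ := hsym ▸ norm_sub_le _ _
      _ ≤ 2 * ‖e‖ + ‖q - 1‖ ^ 2 := by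
        rw [sq]
        gcongr
        · exact norm_add_star_le e
        · exact (norm_mul_le _ _).trans_eq (by rw [norm_star])
      _ ≤ 2 * ‖e‖ + (2 * ‖a‖) ^ 2 := by gcongr
  linarith

theorem norm_one_add_sub_cayleyTransform_le [NormedRing R] [HasSummableGeomSeries R]
    [StarAddMonoid R] [NormedStarGroup R] [NormedAlgebra ℝ R] {a : R} (ha : ‖a‖ ≤ 1) :
    ‖1 + a - cayleyTransform ((1 / 4 : ℝ) • (a - star a))‖ ≤ ‖a + star a‖ / 2 + ‖a‖ ^ 2 := by
  set x := (1 / 4 : ℝ) • (a - star a) with hx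
  set r := cayleyTransform x - (1 + 2 • x)
  have hx_norm : ‖x‖ ≤ ‖a‖ / 2 := norm_quarter_smul_sub_star_le a
  have hr : ‖r‖ ≤ ‖a‖ ^ 2 := by
    have hunit : IsUnit (1 - x) := isUnit_one_sub_of_norm_lt_one (by linarith)
    have hr_mul : (1 - ‖x‖) * ‖r‖ ≤ 2 * ‖x‖ ^ 2 :=
      one_sub_norm_mul_norm_cayleyTransform_sub_le hunit
    have hhalf : 1 / 2 * ‖r‖ ≤ (1 - ‖x‖) * ‖r‖ := by gcongr; linarith
    have hsq : ‖x‖ ^ 2 ≤ (‖a‖ / 2) ^ 2 := by gcongr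
    linarith
  have hsplit : 1 + a - cayleyTransform x = (1 / 2 : ℝ) • (a + star a) - r := by
    simp only [r, hx]
    module
  calc ‖1 + a - cayleyTransform x‖ ≤ ‖(1 / 2 : ℝ) • (a + star a)‖ + ‖r‖ :=
        hsplit ▸ norm_sub_le _ _
    _ ≤ ‖a + star a‖ / 2 + ‖a‖ ^ 2 := by
        rw [norm_smul, Real.norm_of_nonneg (by norm_num)]
        linarith

end NormedStarRing

section SpecialOrthogonalGroup

open scoped Matrix.Norms.Frobenius

variable {n : Type*} [Fintype n] [DecidableEq n]

theorem infDist_one_add_specialOrthogonalGroup_le (A : Matrix n n ℝ) :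
    infDist (1 + A) (specialOrthogonalGroup n ℝ) ≤ ‖A + Aᵀ‖ / 2 + ‖A‖ ^ 2 := by
  rcases le_total ‖A‖ 1 with hA | hA
  · set X := (1 / 4 : ℝ) • (A - Aᵀ) with hXdef
    have hX : Xᵀ = -X := by
      rw [hXdef, transpose_smul, transpose_sub, transpose_transpose]
      module
    have hX_norm : ‖X‖ ≤ ‖A‖ / 2 := norm_quarter_smul_sub_star_le A
    have hunit : IsUnit (1 - X) := isUnit_one_sub_of_norm_lt_one (by linarith)
    calc infDist (1 + A) (specialOrthogonalGroup n ℝ) ≤ ‖1 + A - cayleyTransform X‖ :=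
          (infDist_le_dist_of_mem (cayleyTransform_mem_specialOrthogonalGroup hX hunit)).trans_eq
            (dist_eq_norm _ _)
      _ ≤ ‖A + Aᵀ‖ / 2 + ‖A‖ ^ 2 := norm_one_add_sub_cayleyTransform_le hA
  · calc infDist (1 + A) (specialOrthogonalGroup n ℝ) ≤ dist (1 + A) 1 :=
          infDist_le_dist_of_mem (one_mem _)
      _ = ‖A‖ := by rw [dist_eq_norm, add_sub_cancel_left]
      _ ≤ ‖A + Aᵀ‖ / 2 + ‖A‖ ^ 2 := by
        linarith [le_self_pow₀ hA two_ne_zero, norm_nonneg (A + Aᵀ)]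

theorem le_infDist_one_add_specialOrthogonalGroup (A : Matrix n n ℝ) :
    ‖A + Aᵀ‖ / 2 - 2 * ‖A‖ ^ 2 ≤ infDist (1 + A) (specialOrthogonalGroup n ℝ) := by
  refine (le_infDist ⟨1, one_mem _⟩).2 fun Q hQ => ?_
  rw [dist_eq_norm]
  exact half_norm_add_star_sub_le_norm_one_add_sub A hQ.1

variable {d : ℕ}

theorem frobNorm_eq_norm (A : Matrix (Fin d) (Fin d) ℝ) : frobNorm A = ‖A‖ := by
  simp [frobNorm, frobenius_norm_def, Real.sqrt_eq_rpow]

theorem frobNorm_smul (c : ℝ) (A : Matrix (Fin d) (Fin d) ℝ) :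
    frobNorm (c • A) = |c| * frobNorm A := by
  rw [frobNorm_eq_norm, frobNorm_eq_norm, norm_smul, Real.norm_eq_abs]

theorem distSO_eq_infDist (A : Matrix (Fin d) (Fin d) ℝ) :
    distSO A = infDist A (specialOrthogonalGroup (Fin d) ℝ) := by
  rw [infDist_eq_iInf, iInf, distSO]
  congr 1
  ext r
  simp only [Set.mem_ofPred_eq, Set.mem_range, Subtype.exists, exists_prop, SetLike.mem_coe,
    mem_specialOrthogonalGroup_iff, mem_orthogonalGroup_iff', frobNorm_eq_norm, dist_eq_norm,
    and_assoc, eq_comm (a := r)]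

theorem abs_distSO_one_add_sub_le (A : Matrix (Fin d) (Fin d) ℝ) :
    |distSO (1 + A) - frobNorm (A + Aᵀ) / 2| ≤ 2 * frobNorm A ^ 2 := by
  simp only [distSO_eq_infDist, frobNorm_eq_norm]
  rw [abs_sub_le_iff]
  constructor
  · linarith [infDist_one_add_specialOrthogonalGroup_le A, sq_nonneg ‖A‖]
  · linarith [le_infDist_one_add_specialOrthogonalGroup A]

end SpecialOrthogonalGroup

theorem abs_distSO_one_add_smul_sub_le {d : ℕ} (B : Matrix (Fin d) (Fin d) ℝ) {ε : ℝ}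
    (hε : 0 ≤ ε) :
    |distSO (1 + ε • B) - ε / 2 * frobNorm (B + Bᵀ)| ≤ 2 * frobNorm B ^ 2 * ε ^ 2 := by
  have h := abs_distSO_one_add_sub_le (ε • B)
  rw [transpose_smul, ← smul_add, frobNorm_smul, frobNorm_smul, abs_of_nonneg hε,
    mul_div_right_comm, mul_pow] at h
  linarith

/-- Linearization of the distance to SO(d) around the identity (used in the
proof of Proposition 4.3 of the paper, cf. (3.20) in Friesecke–James–Müller):
`dist_F(1 + εB, SO(d))/ε → ‖(B + Bᵀ)/2‖_F` as `ε → 0⁺`, and in fact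
`dist_F(1 + εB, SO(d)) = (ε/2)‖B + Bᵀ‖_F + O(ε²)` as `ε → 0⁺`. -/
theorem distSO_linearization {d : ℕ} (hd : 2 ≤ d) (B : Matrix (Fin d) (Fin d) ℝ) :
    Tendsto (fun ε : ℝ => distSO (1 + ε • B) / ε) (nhdsWithin 0 (Set.Ioi 0))
      (nhds (frobNorm ((1 / 2 : ℝ) • (B + Bᵀ)))) ∧
    (fun ε : ℝ => distSO (1 + ε • B) - ε / 2 * frobNorm (B + Bᵀ))
      =O[nhdsWithin 0 (Set.Ioi 0)] (fun ε : ℝ => ε ^ 2) := by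
  have hO : (fun ε : ℝ => distSO (1 + ε • B) - ε / 2 * frobNorm (B + Bᵀ))
      =O[nhdsWithin 0 (Set.Ioi 0)] (fun ε : ℝ => ε ^ 2) := by
    refine IsBigO.of_bound (2 * frobNorm B ^ 2) ?_
    filter_upwards [self_mem_nhdsWithin] with ε hε
    rw [Real.norm_eq_abs, Real.norm_of_nonneg (sq_nonneg ε)]
    exact abs_distSO_one_add_smul_sub_le B (le_of_lt hε)
  refine ⟨?_, hO⟩
  have hsq : (fun ε : ℝ => ε ^ 2) =o[nhdsWithin 0 (Set.Ioi 0)] fun ε => ε :=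
    (isLittleO_pow_id one_lt_two).mono nhdsWithin_le_nhds
  refine tendsto_div_of_sub_mul_isLittleO ?_ ((hO.trans_isLittleO hsq).congr_left fun ε => ?_)
  · filter_upwards [self_mem_nhdsWithin] with ε hε using ne_of_gt hε
  · rw [frobNorm_smul, abs_of_pos one_half_pos]
    ring
end

section
/- Let d ≥ 2, let R > 0 be such that the closed Frobenius ball of radius R around the identity 1_d is contained in GL⁺(d) = {A ∈ ℝ^{d×d} : det A > 0}, and let W be a real-valued function, three times continuously differentiable on an open neighbourhood of this ball, such that W(1_d) = 0 and W(F) ≥ c_W · dist_F(F, SO(d))² for all F in the ball, where c_W > 0 and dist_F(F, SO(d)) = inf{‖F − Q‖_F : Q ∈ SO(d)}. Then for every matrix B ∈ ℝ^{d×d}: ‖B + Bᵀ‖_F² ≤ (2/c_W) · D²W(1_d)[B, B], where D²W(1_d)[B,B] denotes the second Fréchet derivative of W at 1_d evaluated twice at B. -/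
open scoped Matrix

attribute [local instance] Matrix.frobeniusNormedAddCommGroup Matrix.frobeniusNormedSpace

/-!
The strain `Fᴴ * F - 1` vanishes on the unitary group, and writing it as `Fᴴ * F - Qᴴ * Q` with `Q`
unitary gives `‖Fᴴ * F - 1‖ ≤ (2 + ‖F - 1‖) * dist(F, U(n))`. Along `F = 1 + t • B` the strain is
`t • (B + Bᴴ) + t ^ 2 • (Bᴴ * B)`, so `dist(F, U(n)) / t` is asymptotically at least
`‖B + Bᴴ‖ / 2`. Coercivity makes `1` a minimum of `W` with value `0`, so Taylor's theorem gives
`W F / t ^ 2 → D²W(1)[B, B] / 2`; divide the coercivity inequality by `t ^ 2` and let `t → 0⁺`.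
Since `SO(d) ⊆ U(d)`, coercivity with respect to `SO(d)` implies coercivity with respect to `U(d)`.
-/

open Filter Metric Topology

section Taylor

variable {E : Type*} [NormedAddCommGroup E] [NormedSpace ℝ E] {f : E → ℝ} {x : E}

theorem tendsto_add_smul_nhds_zero (x v : E) :
    Tendsto (fun t : ℝ => x + t • v) (𝓝 0) (𝓝 x) := by
  have hcont : Continuous fun t : ℝ => x + t • v := by fun_prop
  simpa only [zero_smul, add_zero] using hcont.tendsto 0

theorem hasDerivAt_add_smul (x v : E) (t : ℝ) : HasDerivAt (fun t : ℝ => x + t • v) v t := by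
  simpa only [one_smul] using ((hasDerivAt_id' t).smul_const v).const_add x

theorem eventually_hasDerivAt_comp_add_smul (hf : ContDiffAt ℝ 1 f x) (v : E) :
    ∀ᶠ t : ℝ in 𝓝 0,
      HasDerivAt (fun t : ℝ => f (x + t • v)) (fderiv ℝ f (x + t • v) v) t := by
  have hdiff : ∀ᶠ y in 𝓝 x, DifferentiableAt ℝ f y :=
    (hf.eventually (by simp)).mono fun y hy => hy.differentiableAt one_ne_zero
  filter_upwards [(tendsto_add_smul_nhds_zero x v).eventually hdiff] with t ht
  exact ht.hasFDerivAt.comp_hasDerivAt t (hasDerivAt_add_smul x v t)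

theorem hasDerivAt_fderiv_comp_add_smul (hf : ContDiffAt ℝ 2 f x) (v : E) :
    HasDerivAt (fun t : ℝ => fderiv ℝ f (x + t • v) v) (iteratedFDeriv ℝ 2 f x ![v, v]) 0 := by
  have hdiff : DifferentiableAt ℝ (fderiv ℝ f) x :=
    (hf.fderiv_right (m := 1) one_add_one_eq_two.le).differentiableAt one_ne_zero
  have hfderiv : HasFDerivAt (fderiv ℝ f) (fderiv ℝ (fderiv ℝ f) x) (x + (0 : ℝ) • v) := by
    simpa only [zero_smul, add_zero] using hdiff.hasFDerivAt
  have hcomp := hfderiv.comp_hasDerivAt 0 (hasDerivAt_add_smul x v 0)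
  have happly := hcomp.clm_apply (hasDerivAt_const 0 v)
  simpa [iteratedFDeriv_two_apply] using happly

theorem tendsto_second_order_difference_quotient (hf : ContDiffAt ℝ 2 f x) (v : E) :
    Tendsto (fun t : ℝ => (f (x + t • v) - f x - t * fderiv ℝ f x v) / t ^ 2) (𝓝[≠] 0)
      (𝓝 (iteratedFDeriv ℝ 2 f x ![v, v] / 2)) := by
  have hnum : ∀ᶠ t : ℝ in 𝓝 0,
      HasDerivAt (fun t : ℝ => f (x + t • v) - f x - t * fderiv ℝ f x v)
        (fderiv ℝ f (x + t • v) v - fderiv ℝ f x v) t := by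
    filter_upwards [eventually_hasDerivAt_comp_add_smul (hf.of_le one_le_two) v] with t ht
    simpa only [one_mul] using
      (ht.sub_const (f x)).fun_sub ((hasDerivAt_id' t).mul_const (fderiv ℝ f x v))
  have hquot : Tendsto (fun t : ℝ => (fderiv ℝ f (x + t • v) v - fderiv ℝ f x v) / (2 * t))
      (𝓝[≠] 0) (𝓝 (iteratedFDeriv ℝ 2 f x ![v, v] / 2)) := by
    refine ((hasDerivAt_fderiv_comp_add_smul hf v).tendsto_slope_zero.div_const 2).congr
      fun t => ?_
    simp only [zero_add, zero_smul, add_zero, smul_eq_mul]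
    ring
  refine HasDerivAt.lhopital_zero_nhdsNE (hnum.filter_mono nhdsWithin_le_nhds)
    (Eventually.of_forall fun t => by simpa using hasDerivAt_pow 2 t) ?_ ?_ ?_ hquot
  · filter_upwards [self_mem_nhdsWithin] with t ht
    exact mul_ne_zero two_ne_zero ht
  · have hlim := hnum.self_of_nhds.continuousAt.tendsto
    simp only [zero_smul, add_zero, sub_self, zero_mul] at hlim
    exact hlim.mono_left nhdsWithin_le_nhds
  · have hlim := (continuous_pow (M := ℝ) 2).tendsto 0
    rw [zero_pow two_ne_zero] at hlim
    exact hlim.mono_left nhdsWithin_le_nhds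

theorem two_mul_le_iteratedFDeriv_two_of_isLocalMin {q : ℝ → ℝ} {L : ℝ}
    (hf : ContDiffAt ℝ 2 f x) (hmin : IsLocalMin f x) (v : E) (hq : Tendsto q (𝓝[>] 0) (𝓝 L))
    (hle : ∀ᶠ t : ℝ in 𝓝[>] 0, t ^ 2 * q t ≤ f (x + t • v) - f x) :
    2 * L ≤ iteratedFDeriv ℝ 2 f x ![v, v] := by
  have hquot : Tendsto (fun t : ℝ => (f (x + t • v) - f x) / t ^ 2) (𝓝[>] 0)
      (𝓝 (iteratedFDeriv ℝ 2 f x ![v, v] / 2)) := by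
    simpa only [hmin.fderiv_eq_zero, zero_apply, mul_zero, sub_zero] using
      (tendsto_second_order_difference_quotient hf v).mono_left (nhdsGT_le_nhdsNE 0)
  rw [← le_div_iff₀' two_pos]
  refine le_of_tendsto_of_tendsto hq hquot ?_
  filter_upwards [hle, self_mem_nhdsWithin] with t hqt (ht : 0 < t)
  rwa [le_div_iff₀' (by positivity)]

end Taylor

section Frobenius

variable {𝕜 l m n : Type*} [RCLike 𝕜] [Fintype l] [Fintype m] [Fintype n]

theorem frobenius_norm_sq_eq_re_trace (A : Matrix m n 𝕜) :
    ‖A‖ ^ 2 = RCLike.re (Aᴴ * A).trace := by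
  rw [Matrix.frobenius_norm_def, ← Real.sqrt_eq_rpow, Real.sq_sqrt (by positivity),
    Finset.sum_comm]
  simp only [Matrix.trace, Matrix.diag_apply, Matrix.mul_apply, Matrix.conjTranspose_apply,
    RCLike.star_def, RCLike.conj_mul, map_sum, ← RCLike.ofReal_pow, RCLike.ofReal_re, Real.rpow_two]

theorem frobenius_norm_mul_of_conjTranspose_mul_self_eq_one [DecidableEq m] {U : Matrix l m 𝕜}
    (hU : Uᴴ * U = 1) (A : Matrix m n 𝕜) : ‖U * A‖ = ‖A‖ := by
  have hgram : (U * A)ᴴ * (U * A) = Aᴴ * A := by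
    rw [Matrix.conjTranspose_mul, Matrix.mul_assoc, ← Matrix.mul_assoc Uᴴ, hU, Matrix.one_mul]
  rw [← sq_eq_sq₀ (norm_nonneg _) (norm_nonneg _), frobenius_norm_sq_eq_re_trace,
    frobenius_norm_sq_eq_re_trace, hgram]

variable [DecidableEq n]

theorem frobenius_norm_conjTranspose_mul_self_sub_one_le {Q : Matrix n n 𝕜}
    (hQ : Q ∈ Matrix.unitaryGroup n 𝕜) (F : Matrix n n 𝕜) :
    ‖Fᴴ * F - 1‖ ≤ (2 + ‖F - 1‖) * ‖F - Q‖ := by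
  have hQQ : Qᴴ * Q = 1 := Matrix.mem_unitaryGroup_iff'.mp hQ
  have hQQ' : Qᴴᴴ * Qᴴ = 1 := by
    rw [Matrix.conjTranspose_conjTranspose]
    exact Matrix.mem_unitaryGroup_iff.mp hQ
  have hsplit : Fᴴ * F - 1 = (F - 1)ᴴ * (F - Q) + (F - Q) + (Qᴴ * (F - Q))ᴴ := by
    simp only [Matrix.conjTranspose_sub, Matrix.conjTranspose_mul, Matrix.conjTranspose_one,
      Matrix.conjTranspose_conjTranspose, sub_mul, mul_sub, one_mul, hQQ]
    abel
  calc ‖Fᴴ * F - 1‖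
      ≤ ‖(F - 1)ᴴ * (F - Q)‖ + ‖F - Q‖ + ‖(Qᴴ * (F - Q))ᴴ‖ := hsplit ▸ norm_add₃_le
    _ ≤ ‖(F - 1)ᴴ‖ * ‖F - Q‖ + ‖F - Q‖ + ‖(Qᴴ * (F - Q))ᴴ‖ := by
        gcongr
        exact Matrix.frobenius_norm_mul _ _
    _ = (2 + ‖F - 1‖) * ‖F - Q‖ := by
        rw [Matrix.frobenius_norm_conjTranspose, Matrix.frobenius_norm_conjTranspose,
          frobenius_norm_mul_of_conjTranspose_mul_self_eq_one hQQ']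
        ring

theorem frobenius_norm_conjTranspose_mul_self_sub_one_le_infDist (F : Matrix n n 𝕜) :
    ‖Fᴴ * F - 1‖ ≤ (2 + ‖F - 1‖) * infDist F (Matrix.unitaryGroup n 𝕜 : Set (Matrix n n 𝕜)) := by
  rw [← div_le_iff₀' (by positivity), le_infDist ⟨1, one_mem _⟩]
  intro Q hQ
  rw [div_le_iff₀' (by positivity), dist_eq_norm]
  exact frobenius_norm_conjTranspose_mul_self_sub_one_le hQ F

theorem conjTranspose_mul_self_one_add_smul_sub_one (B : Matrix n n 𝕜) (t : ℝ) :
    (1 + t • B)ᴴ * (1 + t • B) - 1 = t • (B + Bᴴ + t • (Bᴴ * B)) := by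
  simp only [Matrix.conjTranspose_add, Matrix.conjTranspose_one, Matrix.conjTranspose_smul,
    star_trivial, add_mul, mul_add, one_mul, mul_one, Matrix.smul_mul, Matrix.mul_smul, smul_add]
  abel

theorem mul_norm_div_le_infDist_one_add_smul (B : Matrix n n 𝕜) {t : ℝ} (ht : 0 ≤ t) :
    t * (‖B + Bᴴ + t • (Bᴴ * B)‖ / (2 + t * ‖B‖)) ≤
      infDist (1 + t • B) (Matrix.unitaryGroup n 𝕜 : Set (Matrix n n 𝕜)) := by
  have hstrain := frobenius_norm_conjTranspose_mul_self_sub_one_le_infDist (1 + t • B)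
  rw [conjTranspose_mul_self_one_add_smul_sub_one, add_sub_cancel_left, norm_smul, norm_smul,
    Real.norm_of_nonneg ht] at hstrain
  rwa [← mul_div_assoc, div_le_iff₀' (by positivity)]

theorem second_derivative_coercivity_general {W : Matrix n n 𝕜 → ℝ} (hW : ContDiffAt ℝ 2 W 1)
    {c : ℝ} (hc : 0 < c) (hW1 : W 1 = 0)
    (hcoer : ∀ᶠ F in 𝓝 1,
      c * infDist F (Matrix.unitaryGroup n 𝕜 : Set (Matrix n n 𝕜)) ^ 2 ≤ W F)
    (B : Matrix n n 𝕜) :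
    ‖B + Bᴴ‖ ^ 2 ≤ 2 / c * iteratedFDeriv ℝ 2 W 1 ![B, B] := by
  have hmin : IsLocalMin W 1 := by
    filter_upwards [hcoer] with F hF
    exact hW1.trans_le (le_trans (by positivity) hF)
  set r : ℝ → ℝ := fun t => ‖B + Bᴴ + t • (Bᴴ * B)‖ / (2 + t * ‖B‖) with hr
  have hr_tendsto : Tendsto r (𝓝[>] 0) (𝓝 (‖B + Bᴴ‖ / 2)) := by
    have hcont : ContinuousAt r 0 := ContinuousAt.div (by fun_prop) (by fun_prop) (by simp)
    simpa [hr] using hcont.tendsto.mono_left nhdsWithin_le_nhds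
  have hlower : ∀ᶠ t : ℝ in 𝓝[>] 0, t ^ 2 * (c * r t ^ 2) ≤ W (1 + t • B) - W 1 := by
    filter_upwards [self_mem_nhdsWithin, nhdsWithin_le_nhds <|
      (tendsto_add_smul_nhds_zero 1 B).eventually hcoer] with t (ht : 0 < t) hF
    calc t ^ 2 * (c * r t ^ 2)
        = c * (t * r t) ^ 2 := by ring
      _ ≤ c * infDist (1 + t • B) (Matrix.unitaryGroup n 𝕜 : Set (Matrix n n 𝕜)) ^ 2 := by
          gcongr
          exact mul_norm_div_le_infDist_one_add_smul B ht.le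
      _ ≤ W (1 + t • B) - W 1 := by rwa [hW1, sub_zero]
  have hderiv : 2 * (c * (‖B + Bᴴ‖ / 2) ^ 2) ≤ iteratedFDeriv ℝ 2 W 1 ![B, B] :=
    two_mul_le_iteratedFDeriv_two_of_isLocalMin hW hmin B ((hr_tendsto.pow 2).const_mul c) hlower
  rw [div_mul_eq_mul_div, le_div_iff₀ hc]
  linarith

end Frobenius

theorem infDist_orthogonalGroup_sq_le {n : Type*} [Fintype n] [DecidableEq n] (F : Matrix n n ℝ) :
    infDist F (Matrix.orthogonalGroup n ℝ : Set (Matrix n n ℝ)) ^ 2 ≤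
      infDist F {Q : Matrix n n ℝ | Qᵀ * Q = 1 ∧ Q.det = 1} ^ 2 :=
  pow_le_pow_left₀ infDist_nonneg (infDist_le_infDist_of_subset
    (fun _ hQ => (Matrix.mem_orthogonalGroup_iff' _ _).mpr hQ.1) ⟨1, by simp⟩) 2

/-- Coercivity estimate for the linearized elastic energy (from the proof of
Proposition 4.3 of the paper): if `W` is `C³` near the closed Frobenius ball
of radius `R` around the identity contained in GL⁺(d), vanishes at the
identity and satisfies `W(F) ≥ c_W dist_F(F, SO(d))²` on the ball, then
`‖B + Bᵀ‖_F² ≤ (2/c_W) D²W(1)[B,B]` for every matrix `B`. Here the norm on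
matrices is the Frobenius norm. -/
theorem second_derivative_coercivity {d : ℕ} (hd : 2 ≤ d)
    (R : ℝ) (hR : 0 < R)
    (hball : Metric.closedBall (1 : Matrix (Fin d) (Fin d) ℝ) R ⊆
      {A : Matrix (Fin d) (Fin d) ℝ | 0 < A.det})
    (W : Matrix (Fin d) (Fin d) ℝ → ℝ)
    (V : Set (Matrix (Fin d) (Fin d) ℝ)) (hV : IsOpen V)
    (hVsub : Metric.closedBall (1 : Matrix (Fin d) (Fin d) ℝ) R ⊆ V)
    (hW : ContDiffOn ℝ 3 W V)
    (cW : ℝ) (hcW : 0 < cW)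
    (hW1 : W 1 = 0)
    (hcoer : ∀ F ∈ Metric.closedBall (1 : Matrix (Fin d) (Fin d) ℝ) R,
      cW * (Metric.infDist F
        {Q : Matrix (Fin d) (Fin d) ℝ | Qᵀ * Q = 1 ∧ Q.det = 1}) ^ 2 ≤ W F)
    (B : Matrix (Fin d) (Fin d) ℝ) :
    ‖B + Bᵀ‖ ^ 2 ≤ (2 / cW) * iteratedFDeriv ℝ 2 W 1 ![B, B] := by
  have hnhds := closedBall_mem_nhds (1 : Matrix (Fin d) (Fin d) ℝ) hR
  exact second_derivative_coercivity_general
    ((hW.contDiffAt (mem_of_superset hnhds hVsub)).of_le (by norm_num)) hcW hW1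
    (mem_of_superset hnhds fun F hF =>
      (mul_le_mul_of_nonneg_left (infDist_orthogonalGroup_sq_le F) hcW.le).trans (hcoer F hF)) B
end
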